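/- Let p and q be primes satisfying conditions (1). Then the class number of the real biquadratic field Q(√p, √q) is odd. -/

import Mathlib

noncomputable section

open IntermediateField NumberField

/-- Conditions (1). -/
def Cond1 (p q : ℕ) : Prop :=
  p.Prime ∧ q.Prime ∧ p % 4 = 1 ∧ q % 4 = 3 ∧
    jacobiSym 2 p = -1 ∧ jacobiSym 2 q = 1 ∧ jacobiSym (p : ℤ) q = -1

/-- The real biquadratic field `ℚ(√p, √q)` as a subfield of `ℝ`. -/
def Kf (p q : ℕ) : IntermediateField ℚ ℝ :=
  adjoin ℚ {Real.sqrt p, Real.sqrt q}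

/-!
Let `k = ℚ(√q)` and `E = k(√p)`. For a quadratic extension `L / K` with conjugation `σ` and with
`K` of odd class number, suppose that `I` represents a class of order two of `L`, say `I ^ 2 = (a)`
and `I * σ I = (n)` with `n` in `K`. Then `a / n` has unit norm, and if that unit is the norm of a
unit, Hilbert's Theorem 90 replaces `I` by a `σ`-invariant ideal of the same class, which is a
product of an extended ideal and ramified primes. So `L` has odd class number as soon as its
ramified primes are principal and the units of `K` in question are norms of units.

* For `k / ℚ`: since `q ≡ 3 [MOD 4]`, the unit `-1` is not a norm. The ramified primes lie over `q`
  and `2`, and are generated by `√q` and by an element `b` of norm `2 * (2 / q)`, which comes from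
  the least solution of the Pell equation `T ^ 2 - q * U ^ 2 = 1`.
* For `E / k`: since `p ≡ 1 [MOD 4]` and `(q / p) = -1`, the only ramified prime is `(√p)`. Another
  application of Hilbert 90 shows that the units of `k` are generated, up to squares, by `-1` and
  `b ^ 2 / N b`. The first is a norm because `x ^ 2 - p * y ^ 2 = -1` is solvable, the second
  because `N b` is the norm of an element of `k(√p)`, by the Pell equation
  `T ^ 2 - p * q * U ^ 2 = 1`.
-/

section Principal

variable {R : Type*} [CommRing R] [IsDedekindDomain R] {I : Ideal R}

theorem isPrincipal_of_isPrincipal_mul_span {c : R} (hc : c ≠ 0)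
    (h : (I * Ideal.span {c}).IsPrincipal) : I.IsPrincipal := by
  obtain ⟨b, hb⟩ := h
  rw [Ideal.submodule_span_eq] at hb
  obtain ⟨d, rfl⟩ : c ∣ b := by
    rw [← Ideal.span_singleton_le_span_singleton, ← hb]
    exact Ideal.mul_le_right (I := I)
  have hcancel : I * Ideal.span {c} = Ideal.span {d} * Ideal.span {c} := by
    rw [hb, Ideal.span_singleton_mul_span_singleton, mul_comm]
  exact ⟨d, mul_right_cancel₀ (by simpa using hc) hcancel⟩

theorem isPrincipal_of_isPrincipal_pow_of_coprime {m n : ℕ} (hmn : m.Coprime n)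
    (hm : (I ^ m).IsPrincipal) (hn : (I ^ n).IsPrincipal) : I.IsPrincipal := by
  by_cases hI0 : I = 0
  · simp [hI0, bot_isPrincipal]
  have hI : I ∈ nonZeroDivisors (Ideal R) := mem_nonZeroDivisors_of_ne_zero hI0
  rw [← ClassGroup.mk0_eq_one_iff (pow_mem hI _), ← SubmonoidClass.mk_pow I hI, map_pow] at hm hn
  rw [← ClassGroup.mk0_eq_one_iff hI, ← pow_one (ClassGroup.mk0 _), ← hmn.gcd_eq_one]
  exact pow_gcd_eq_one.2 ⟨hm, hn⟩

variable (I) in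
theorem isPrincipal_pow_card_classGroup : (I ^ Nat.card (ClassGroup R)).IsPrincipal := by
  by_cases hI0 : I = 0
  · obtain hcard | hcard := eq_or_ne (Nat.card (ClassGroup R)) 0
    · rw [hcard, pow_zero, Ideal.one_eq_top]
      exact top_isPrincipal
    · rw [hI0, zero_pow hcard]
      exact bot_isPrincipal
  · have hI : I ∈ nonZeroDivisors (Ideal R) := mem_nonZeroDivisors_of_ne_zero hI0
    rw [← ClassGroup.mk0_eq_one_iff (pow_mem hI _), ← SubmonoidClass.mk_pow I hI, map_pow,
      pow_card_eq_one']

theorem odd_card_classGroup_iff [Finite (ClassGroup R)] :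
    Odd (Nat.card (ClassGroup R)) ↔ ∀ I : Ideal R, (I ^ 2).IsPrincipal → I.IsPrincipal := by
  refine ⟨fun h I hI ↦ isPrincipal_of_isPrincipal_pow_of_coprime h.coprime_two_left hI
    (isPrincipal_pow_card_classGroup I), fun h ↦ ?_⟩
  by_contra heven
  rw [Nat.not_odd_iff_even, even_iff_two_dvd] at heven
  obtain ⟨g, hg⟩ := exists_prime_orderOf_dvd_card' 2 heven
  obtain ⟨⟨I, hI⟩, rfl⟩ := ClassGroup.mk0_surjective g
  have hI2 : (I ^ 2).IsPrincipal := by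
    rw [← ClassGroup.mk0_eq_one_iff (pow_mem hI _), ← SubmonoidClass.mk_pow I hI, map_pow, ← hg,
      pow_orderOf_eq_one]
  rw [(ClassGroup.mk0_eq_one_iff hI).2 (h I hI2), orderOf_one] at hg
  simp at hg

end Principal

section RelNorm

variable {R S : Type*} [CommRing R] [CommRing S] [IsDedekindDomain R] [IsDedekindDomain S]
  [Algebra R S] [Module.Finite R S] [Module.IsTorsionFree R S]

theorem eq_top_of_relNorm_eq_top {I : Ideal S} (hI : Ideal.relNorm R I = ⊤) : I = ⊤ := by
  have hle := Ideal.relNorm_le_comap R I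
  rwa [hI, top_le_iff, Ideal.comap_eq_top_iff] at hle

theorem eq_span_singleton_of_prime_intNorm {P : Ideal S} (hP : P ≠ ⊤) {x : S} (hx : x ∈ P)
    (hprime : Prime (Algebra.intNorm R S x)) : P = Ideal.span {x} := by
  obtain ⟨J, hJ⟩ := Ideal.dvd_iff_le.2 ((Ideal.span_singleton_le_iff_mem P).2 hx)
  have hirr : Irreducible (Ideal.relNorm R P * Ideal.relNorm R J) := by
    rw [← map_mul, ← hJ, Ideal.relNorm_singleton]
    exact (Ideal.prime_of_isPrime (by simpa using hprime.ne_zero)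
      ((Ideal.span_singleton_prime hprime.ne_zero).2 hprime)).irreducible
  rcases hirr.isUnit_or_isUnit rfl with hP1 | hJ1
  · exact absurd (eq_top_of_relNorm_eq_top (R := R) (Ideal.isUnit_iff.1 hP1)) hP
  · rw [hJ, eq_top_of_relNorm_eq_top (R := R) (Ideal.isUnit_iff.1 hJ1), Ideal.mul_top]

theorem associated_intNorm {σ : S ≃ₐ[R] S} {I : Ideal S} (hI : I ≠ ⊥) {x y : S}
    (hxy : Ideal.span {x} * I.map σ = Ideal.span {y} * I) :
    Associated (Algebra.intNorm R S x) (Algebra.intNorm R S y) := by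
  have hrelNorm := congr(Ideal.relNorm R $hxy)
  rw [map_mul, map_mul, Ideal.relNorm_map_algEquiv, Ideal.relNorm_singleton,
    Ideal.relNorm_singleton] at hrelNorm
  exact Ideal.span_singleton_eq_span_singleton.1 <|
    mul_right_cancel₀ (mt Ideal.relNorm_eq_bot_iff.1 hI) hrelNorm

end RelNorm

/-! ### Quadratic extensions of Dedekind domains -/

section Quadratic

variable {R S : Type*} [CommRing R] [CommRing S] [Algebra R S] {σ : S ≃ₐ[R] S}

/-- `σ` is the conjugation of the quadratic extension `S` of `R`: the rank is two and `σ` is not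
the identity. -/
structure IsQuadraticConj (σ : S ≃ₐ[R] S) : Prop where
  finrank_eq_two : Module.finrank R S = 2
  ne_one : σ ≠ 1

namespace IsQuadraticConj

theorem exists_apply_ne (h : IsQuadraticConj σ) : ∃ x, σ x ≠ x := by
  by_contra! hσ
  exact h.ne_one (AlgEquiv.ext hσ)

variable [IsDedekindDomain R] [IsDedekindDomain S] [Module.Finite R S] [Module.IsTorsionFree R S]
  [CharZero R]

attribute [local instance] FractionRing.liftAlgebra

theorem isGalois (h : IsQuadraticConj σ) :
    IsGalois (FractionRing R) (FractionRing S) := by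
  have : CharZero (FractionRing R) := IsFractionRing.charZero R
  have : Algebra.IsQuadraticExtension (FractionRing R) (FractionRing S) :=
    ⟨by rw [IsFractionRing.finrank_eq R (FractionRing R) S, h.finrank_eq_two]⟩
  infer_instance

theorem eq_one_or_eq (h : IsQuadraticConj σ) (ρ : S ≃ₐ[R] S) : ρ = 1 ∨ ρ = σ := by
  have := h.isGalois
  have : FiniteDimensional (FractionRing R) (FractionRing S) :=
    .of_isLocalization R S (nonZeroDivisors R)
  have hcard : Nat.card (S ≃ₐ[R] S) = 2 := by
    rw [← Nat.card_congr (galRestrict R (FractionRing R) (FractionRing S) S).toEquiv,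
      IsGalois.card_aut_eq_finrank, IsFractionRing.finrank_eq R (FractionRing R) S,
      h.finrank_eq_two]
  obtain ⟨_, -, hυ⟩ := (Nat.card_eq_two_iff' 1).1 hcard
  exact or_iff_not_imp_left.2 fun hρ ↦ (hυ ρ hρ).trans (hυ σ h.ne_one).symm

theorem apply_apply (h : IsQuadraticConj σ) (x : S) : σ (σ x) = x := by
  have hσσ : σ * σ = 1 :=
    (h.eq_one_or_eq (σ * σ)).resolve_right fun hσ ↦ h.ne_one (mul_eq_left.1 hσ)
  exact congr($hσσ x)

theorem algebraMap_intNorm (h : IsQuadraticConj σ) (x : S) :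
    algebraMap R S (Algebra.intNorm R S x) = x * σ x := by
  classical
  have := h.isGalois
  have huniv : (Finset.univ : Finset (S ≃ₐ[R] S)) = {1, σ} := by
    ext ρ
    simpa using h.eq_one_or_eq ρ
  rw [Algebra.algebraMap_intNorm_of_isGalois, huniv, Finset.prod_pair h.ne_one.symm,
    AlgEquiv.one_apply]

theorem exists_algebraMap_eq (h : IsQuadraticConj σ) {x : S} (hx : σ x = x) :
    ∃ r, algebraMap R S r = x := by
  have := h.isGalois
  have : FiniteDimensional (FractionRing R) (FractionRing S) :=
    .of_isLocalization R S (nonZeroDivisors R)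
  refine (Algebra.isInvariant_of_isGalois' R (FractionRing R) (FractionRing S) S).isInvariant x
    fun ρ ↦ ?_
  rcases h.eq_one_or_eq ρ with rfl | rfl
  exacts [rfl, hx]

theorem intNorm_eq_iff (h : IsQuadraticConj σ) {x : S} {r : R} :
    Algebra.intNorm R S x = r ↔ x * σ x = algebraMap R S r := by
  rw [← h.algebraMap_intNorm, (FaithfulSMul.algebraMap_injective R S).eq_iff]

theorem intNorm_algebraMap (h : IsQuadraticConj σ) (r : R) :
    Algebra.intNorm R S (algebraMap R S r) = r ^ 2 := by
  rw [h.intNorm_eq_iff, σ.commutes, map_pow, pow_two]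

/-- Hilbert's Theorem 90, without denominators. -/
theorem exists_mul_apply_eq_mul (h : IsQuadraticConj σ) {x y : S} (hy : y ≠ 0)
    (hxy : Algebra.intNorm R S x = Algebra.intNorm R S y) : ∃ c ≠ 0, y * σ c = x * c := by
  replace hxy : x * σ x = y * σ y := by
    rw [← h.algebraMap_intNorm, hxy, h.algebraMap_intNorm]
  by_cases hyx : y = -x
  · obtain ⟨s, hs⟩ := h.exists_apply_ne
    refine ⟨σ s - s, sub_ne_zero.2 hs, ?_⟩
    rw [hyx, map_sub, h.apply_apply]
    ring
  · refine ⟨y * σ (y + x), mul_ne_zero hy ?_, ?_⟩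
    · rwa [Ne, EmbeddingLike.map_eq_zero_iff, ← eq_neg_iff_add_eq_zero]
    · rw [map_mul, h.apply_apply, map_add]
      linear_combination -y * hxy

theorem map_map (h : IsQuadraticConj σ) (I : Ideal S) : (I.map σ).map σ = I := by
  have hσσ : (σ : S →+* S).comp σ = RingHom.id S := RingHom.ext h.apply_apply
  exact (Ideal.map_map (σ : S →+* S) (σ : S →+* S)).trans (by rw [hσσ, Ideal.map_id])

theorem mul_map (h : IsQuadraticConj σ) (I : Ideal S) :
    I * I.map σ = (Ideal.relNorm R I).map (algebraMap R S) := by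
  by_cases hI : I = ⊥
  · simp [hI]
  have hle : (Ideal.relNorm R I).map (algebraMap R S) ≤ I * I.map σ := by
    rw [Ideal.map_relNorm, Ideal.span_le]
    rintro _ ⟨x, hx, rfl⟩
    simp only [Function.comp_apply, h.algebraMap_intNorm]
    exact Ideal.mul_mem_mul hx (Ideal.mem_map_of_mem _ hx)
  obtain ⟨J, hJ⟩ := Ideal.dvd_iff_le.2 hle
  have hrelNorm : Ideal.relNorm R I * Ideal.relNorm R I * Ideal.relNorm R J =
      Ideal.relNorm R I * Ideal.relNorm R I := by
    calc _ = Ideal.relNorm R (I * I.map σ * J) := by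
          rw [map_mul, map_mul, Ideal.relNorm_map_algEquiv]
      _ = _ := by rw [← hJ, Ideal.relNorm_algebraMap, h.finrank_eq_two, pow_two]
  have hJ1 : Ideal.relNorm R J = ⊤ :=
    Ideal.one_eq_top (R := R) ▸ (mul_eq_left₀ (by simpa using hI)).1 hrelNorm
  rw [hJ, eq_top_of_relNorm_eq_top hJ1, Ideal.mul_top]

end IsQuadraticConj

theorem mem_inertia_of_inertiaDeg_eq_one [Module.Finite R S] {P : Ideal S} [P.IsMaximal]
    (hPσ : P.map σ = P) (hP : P.inertiaDeg R = 1) :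
    σ ∈ P.inertia (S ≃ₐ[R] S) := by
  intro x
  rw [Ideal.inertiaDeg_eq_of_isMaximal (P.under R)] at hP
  let : Field (R ⧸ P.under R) := Ideal.Quotient.field _
  obtain ⟨y, hy⟩ := (Algebra.finrank_eq_one_iff_bijective_algebraMap.1 hP).2
    (Ideal.Quotient.mk P x)
  obtain ⟨r, rfl⟩ := Ideal.Quotient.mk_surjective y
  have hxr : x - algebraMap R S r ∈ P := Ideal.Quotient.eq.1 hy.symm
  have hσxr : σ x - algebraMap R S r ∈ P := by
    simpa [hPσ] using Ideal.mem_map_of_mem σ hxr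
  simpa using P.sub_mem hσxr hxr

theorem mul_map_dvd_of_le [IsDedekindDomain S] {P : Ideal S} [P.IsMaximal]
    (hPσ : P.map σ ≠ P) {I : Ideal S} (hIP : I ≤ P) (hIσ : I.map σ = I) : P * P.map σ ∣ I := by
  have : (P.map σ).IsMaximal := Ideal.map_isMaximal_of_equiv σ
  rw [Ideal.dvd_iff_le, Ideal.mul_eq_inf_of_isCoprime (Ideal.isCoprime_of_isMaximal hPσ.symm)]
  exact le_inf hIP (hIσ ▸ Ideal.map_mono hIP)

variable [IsDedekindDomain R] [IsDedekindDomain S]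

namespace IsQuadraticConj

variable [Module.Finite R S] [Module.IsTorsionFree R S] [CharZero R] {P : Ideal S}

theorem eq_map_under_or_mem_inertia (h : IsQuadraticConj σ) [P.IsMaximal] (hP0 : P ≠ ⊥)
    (hPσ : P.map σ = P) : P = (P.under R).map (algebraMap R S) ∨ σ ∈ P.inertia (S ≃ₐ[R] S) := by
  have hprime : Prime P := Ideal.prime_of_isPrime hP0 inferInstance
  have hsq : P ^ 2 = (P.under R).map (algebraMap R S) ^ P.inertiaDeg R := by
    rw [← Ideal.map_pow, ← Ideal.relNorm_eq_pow_of_isMaximal P (P.under R), ← h.mul_map, hPσ,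
      pow_two]
  obtain ⟨i, -, hi⟩ := (dvd_prime_pow hprime 2).1 <|
    hsq ▸ dvd_pow_self ((P.under R).map (algebraMap R S)) (Ideal.inertiaDeg_pos P R).ne'
  rw [associated_iff_eq] at hi
  have hdeg : 2 = i * P.inertiaDeg R := by
    rw [hi, ← pow_mul] at hsq
    exact pow_injective_of_not_isUnit hprime.not_isUnit hprime.ne_zero hsq
  rcases (Nat.dvd_prime Nat.prime_two).1 ⟨_, hdeg⟩ with rfl | rfl
  · exact .inl (by rw [hi, pow_one])
  · exact .inr (mem_inertia_of_inertiaDeg_eq_one hPσ (by lia))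

theorem exists_invariant_dvd (h : IsQuadraticConj σ) {I : Ideal S} (hI : I ≠ ⊥) (hI1 : I ≠ ⊤)
    (hIσ : I.map σ = I) :
    ∃ Q, Q ∣ I ∧ Q ≠ ⊤ ∧ Q.map σ = Q ∧ ((∃ J : Ideal R, J ≠ ⊥ ∧ Q = J.map (algebraMap R S)) ∨
      (Q.IsPrime ∧ σ ∈ Q.inertia (S ≃ₐ[R] S))) := by
  obtain ⟨P, hP, hIP⟩ := Ideal.exists_le_maximal I hI1
  have hP0 : P ≠ ⊥ := fun h0 ↦ hI (le_bot_iff.1 (h0 ▸ hIP))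
  by_cases hPσ : P.map σ = P
  · refine ⟨P, Ideal.dvd_iff_le.2 hIP, hP.ne_top, hPσ,
      (h.eq_map_under_or_mem_inertia hP0 hPσ).imp (fun hPu ↦ ⟨_, fun h0 ↦ hP0 ?_, hPu⟩)
        fun hσ ↦ ⟨hP.isPrime, hσ⟩⟩
    rw [hPu, h0, Ideal.map_bot]
  · refine ⟨P * P.map σ, mul_map_dvd_of_le hPσ hIP hIσ,
      ne_top_of_le_ne_top hP.ne_top Ideal.mul_le_left, by rw [Ideal.map_mul, h.map_map, mul_comm],
      .inl ⟨_, ?_, h.mul_map P⟩⟩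
    rwa [Ne, Ideal.relNorm_eq_bot_iff]

theorem invariant_induction (h : IsQuadraticConj σ) {motive : Ideal S → Prop}
    (mul : ∀ I J, motive I → motive J → motive (I * J))
    (map : ∀ J : Ideal R, J ≠ ⊥ → motive (J.map (algebraMap R S)))
    (inertia : ∀ P : Ideal S, P.IsPrime → σ ∈ P.inertia (S ≃ₐ[R] S) → motive P)
    (I : Ideal S) (hI : I ≠ ⊥) (hIσ : I.map σ = I) : motive I := by
  induction I using IsWellFounded.induction (· > · : Ideal S → Ideal S → Prop) with
  | ind I ih =>
  by_cases hI1 : I = ⊤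
  · simpa [hI1, Ideal.map_top] using map ⊤ top_ne_bot
  obtain ⟨Q, ⟨J, rfl⟩, hQ1, hQσ, hQ⟩ := h.exists_invariant_dvd hI hI1 hIσ
  obtain ⟨hQ0, hJ0⟩ := mul_ne_zero_iff.1 hI
  have hJσ : J.map σ = J := by
    rw [Ideal.map_mul, hQσ] at hIσ
    exact mul_left_cancel₀ hQ0 hIσ
  have hlt : Q * J < J := by
    refine lt_of_le_of_ne Ideal.mul_le_right fun hQJ ↦ hQ1 ?_
    rw [← Ideal.one_eq_top]
    exact (mul_eq_right₀ hJ0).1 hQJ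
  refine mul Q J ?_ (ih J hlt hJ0 hJσ)
  rcases hQ with ⟨J', hJ', rfl⟩ | ⟨hQprime, hQinertia⟩
  exacts [map J' hJ', inertia Q hQprime hQinertia]

theorem exists_mul_span_invariant (h : IsQuadraticConj σ) {I : Ideal S} {x y : S} (hx : x ≠ 0)
    (hy : y ≠ 0) (hI : Ideal.span {x} * I.map σ = Ideal.span {y} * I)
    (hxy : Algebra.intNorm R S x = Algebra.intNorm R S y) :
    ∃ c ≠ 0, (I * Ideal.span {c}).map σ = I * Ideal.span {c} := by
  obtain ⟨c, hc0, hc⟩ := h.exists_mul_apply_eq_mul hy hxy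
  refine ⟨c, hc0, mul_left_cancel₀ (a := Ideal.span {x}) (by simpa using hx) ?_⟩
  calc Ideal.span {x} * (I * Ideal.span {c}).map σ
      = Ideal.span {x} * I.map σ * Ideal.span {σ c} := by
        rw [Ideal.map_mul, Ideal.map_span, Set.image_singleton, mul_assoc]
    _ = Ideal.span {y * σ c} * I := by
        rw [hI, ← Ideal.span_singleton_mul_span_singleton]
        ring
    _ = Ideal.span {x} * (I * Ideal.span {c}) := by
        rw [hc, ← Ideal.span_singleton_mul_span_singleton]
        ring

theorem isPrincipal_pow_of_invariant (h : IsQuadraticConj σ)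
    (hram : ∀ P : Ideal S, P.IsPrime → σ ∈ P.inertia (S ≃ₐ[R] S) → P.IsPrincipal)
    {I : Ideal S} (hI : I ≠ ⊥) (hIσ : I.map σ = I) : (I ^ Nat.card (ClassGroup R)).IsPrincipal := by
  refine h.invariant_induction (motive := fun J ↦ (J ^ Nat.card (ClassGroup R)).IsPrincipal)
    ?_ ?_ ?_ I hI hIσ
  · rintro J K ⟨b, hb⟩ ⟨d, hd⟩
    exact ⟨b * d, by rw [mul_pow, hb, hd, Ideal.submodule_span_eq, Ideal.submodule_span_eq,
      Ideal.span_singleton_mul_span_singleton]⟩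
  · intro J _
    obtain ⟨b, hb⟩ := isPrincipal_pow_card_classGroup J
    exact ⟨algebraMap R S b, by rw [← Ideal.map_pow, hb, Ideal.submodule_span_eq, Ideal.map_span,
      Set.image_singleton]⟩
  · intro P hP hσ
    obtain ⟨b, hb⟩ := hram P hP hσ
    exact ⟨b ^ Nat.card (ClassGroup R), by rw [hb, Ideal.submodule_span_eq,
      Ideal.span_singleton_pow]⟩

theorem exists_span_mul_map_eq (h : IsQuadraticConj σ) (hR : Odd (Nat.card (ClassGroup R)))
    {I : Ideal S} {a : S} (ha : I ^ 2 = Ideal.span {a}) :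
    ∃ n : R, Ideal.span {a} * I.map σ = Ideal.span {algebraMap R S n} * I := by
  have := Nat.finite_of_card_ne_zero hR.pos.ne'
  obtain ⟨n, hn⟩ : (Ideal.relNorm R I).IsPrincipal := odd_card_classGroup_iff.1 hR _
    ⟨Algebra.intNorm R S a, by rw [← map_pow, ha, Ideal.relNorm_singleton]⟩
  have hmul := h.mul_map I
  rw [hn, Ideal.submodule_span_eq, Ideal.map_span, Set.image_singleton] at hmul
  exact ⟨n, by rw [← ha, ← hmul]; ring⟩

theorem isPrincipal_of_isPrincipal_sq (h : IsQuadraticConj σ)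
    (hR : Odd (Nat.card (ClassGroup R)))
    (hunit : ∀ (u : Rˣ) (x y : S), y ≠ 0 → Algebra.intNorm R S x * u = Algebra.intNorm R S y →
      (u : R) ∈ MonoidHom.mrange (Algebra.intNorm R S))
    (hram : ∀ P : Ideal S, P.IsPrime → σ ∈ P.inertia (S ≃ₐ[R] S) → P.IsPrincipal) {I : Ideal S}
    (hI : (I ^ 2).IsPrincipal) : I.IsPrincipal := by
  by_cases hI0 : I = ⊥
  · exact hI0 ▸ bot_isPrincipal
  obtain ⟨a, ha⟩ := id hI
  have ha0 : a ≠ 0 := by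
    rintro rfl
    rw [Ideal.submodule_span_eq, Ideal.span_singleton_zero] at ha
    exact pow_ne_zero 2 hI0 ha
  obtain ⟨n, hn⟩ := h.exists_span_mul_map_eq hR ha
  obtain ⟨u, hu⟩ := associated_intNorm hI0 hn
  have hn0 : algebraMap R S n ≠ 0 := by
    intro hn0
    rw [hn0, Ideal.span_singleton_zero, Ideal.bot_mul, Ideal.mul_eq_bot] at hn
    simp_all
  obtain ⟨v, hv⟩ := hunit u a _ hn0 hu
  have hvu : IsUnit v := isUnit_of_mul_isUnit_left <| by
    rw [h.intNorm_eq_iff.1 hv]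
    exact u.isUnit.map (algebraMap R S)
  obtain ⟨c, hc0, hc⟩ := h.exists_mul_span_invariant (I := I) (x := v * a)
    (mul_ne_zero hvu.ne_zero ha0) hn0
    (by rw [Ideal.span_singleton_mul_left_unit hvu, hn])
    (by rw [← hu, ← hv, map_mul, mul_comm])
  have hcpow := h.isPrincipal_pow_of_invariant hram
    (mul_ne_zero hI0 (mt Ideal.span_singleton_eq_bot.1 hc0)) hc
  rw [mul_pow, Ideal.span_singleton_pow] at hcpow
  exact isPrincipal_of_isPrincipal_pow_of_coprime hR.coprime_two_left hI
    (isPrincipal_of_isPrincipal_mul_span (pow_ne_zero _ hc0) hcpow)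

theorem odd_card_classGroup [Finite (ClassGroup S)] (h : IsQuadraticConj σ)
    (hR : Odd (Nat.card (ClassGroup R)))
    (hunit : ∀ (u : Rˣ) (x y : S), y ≠ 0 → Algebra.intNorm R S x * u = Algebra.intNorm R S y →
      (u : R) ∈ MonoidHom.mrange (Algebra.intNorm R S))
    (hram : ∀ P : Ideal S, P.IsPrime → σ ∈ P.inertia (S ≃ₐ[R] S) → P.IsPrincipal) :
    Odd (Nat.card (ClassGroup S)) :=
  odd_card_classGroup_iff.2 fun _ hI ↦ h.isPrincipal_of_isPrincipal_sq hR hunit hram hI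

/-- Hilbert 90 writes a unit `u` of norm one as `c / σ c` with `(c)` invariant, so `u` is a product
of the analogous quotients for the ramified primes, up to squares. -/
theorem unit_mem_of_inertia [IsPrincipalIdealRing R] (h : IsQuadraticConj σ)
    (hunit : ∀ u : Sˣ, Algebra.intNorm R S u = 1) {N : Submonoid S}
    (hsq : ∀ u : Sˣ, (u : S) ^ 2 ∈ N)
    (hram : ∀ P : Ideal S, P.IsPrime → σ ∈ P.inertia (S ≃ₐ[R] S) →
      ∃ d, P = Ideal.span {d} ∧ ∃ w ∈ N, d = w * σ d) (u : Sˣ) : (u : S) ∈ N := by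
  obtain ⟨c, hc0, hc⟩ := h.exists_mul_apply_eq_mul u.ne_zero (x := 1) (by rw [hunit, map_one])
  rw [one_mul] at hc
  have hinv : (Ideal.span {c}).map σ = Ideal.span {c} := by
    rw [Ideal.map_span, Set.image_singleton, Ideal.span_singleton_eq_span_singleton]
    exact ⟨u, by rw [mul_comm, hc]⟩
  obtain ⟨d, hcd, w, hw, hd⟩ := h.invariant_induction
    (motive := fun I ↦ ∃ d, I = Ideal.span {d} ∧ ∃ w ∈ N, d = w * σ d)
    (mul := by
      rintro _ _ ⟨d, rfl, w, hw, hd⟩ ⟨d', rfl, w', hw', hd'⟩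
      refine ⟨d * d', Ideal.span_singleton_mul_span_singleton _ _, w * w', mul_mem hw hw', ?_⟩
      calc d * d' = w * σ d * (w' * σ d') := by rw [← hd, ← hd']
        _ = w * w' * σ (d * d') := by
          rw [map_mul]
          ring)
    (map := fun J _ ↦ by
      obtain ⟨n, rfl⟩ := IsPrincipalIdealRing.principal J
      exact ⟨algebraMap R S n, by rw [Ideal.submodule_span_eq, Ideal.map_span, Set.image_singleton],
        1, one_mem N, by rw [σ.commutes, one_mul]⟩)
    (inertia := hram) (Ideal.span {c}) (by simpa using hc0) hinv
  obtain ⟨v, rfl⟩ := Ideal.span_singleton_eq_span_singleton.1 hcd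
  have hv : (v : S) * σ v = 1 := by rw [h.intNorm_eq_iff.1 (hunit v), map_one]
  have hσc : σ c ≠ 0 := by rwa [Ne, EmbeddingLike.map_eq_zero_iff]
  have hu : (u : S) = w * σ v ^ 2 := by
    refine mul_right_cancel₀ hσc ?_
    rw [map_mul] at hd
    linear_combination hc + σ v * hd - c * hv
  rw [hu]
  exact mul_mem hw (hsq (Units.map (σ : S →* S) v))

theorem exists_eq_mul_apply (h : IsQuadraticConj σ) {d : S}
    (hσ : σ ∈ (Ideal.span {d}).inertia (S ≃ₐ[R] S)) : ∃ w, d = w * σ d := by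
  obtain ⟨t, ht⟩ := Ideal.mem_span_singleton.1 (hσ d)
  refine ⟨σ (1 + t), ?_⟩
  rw [AlgEquiv.smul_def] at ht
  rw [← map_mul, show (1 + t) * d = σ d by linear_combination -ht, h.apply_apply]

theorem eq_span_singleton_of_mem_inertia (h : IsQuadraticConj σ) {P : Ideal S} (hP : P.IsPrime)
    (hσ : σ ∈ P.inertia (S ≃ₐ[R] S)) {x : S} (hx : Prime (Algebra.intNorm R S x))
    (hxP : algebraMap R S (Algebra.intNorm R S x) ∈ P) : P = Ideal.span {x} := by
  refine eq_span_singleton_of_prime_intNorm hP.ne_top ?_ hx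
  rw [h.algebraMap_intNorm] at hxP
  refine (hP.mem_or_mem hxP).elim id fun hσx ↦ ?_
  simpa using P.sub_mem hσx (hσ x)

end IsQuadraticConj

end Quadratic

/-! ### Adjoining a square root -/

theorem two_dvd_one_add_of_four_dvd {S : Type*} [CommRing S] [IsDomain S] [IsIntegrallyClosed S]
    [NeZero (2 : S)] {s : S} (hs : 4 ∣ s ^ 2 - 1) : 2 ∣ 1 + s := by
  obtain ⟨m, hm⟩ := hs
  have hi := IsFractionRing.injective S (FractionRing S)
  have h2 : (2 : FractionRing S) ≠ 0 := by
    rw [← map_ofNat (algebraMap S (FractionRing S)), Ne, map_eq_zero_iff _ hi]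
    exact two_ne_zero
  have hm' := congr(algebraMap S (FractionRing S) $hm)
  simp only [map_sub, map_pow, map_one, map_mul, map_ofNat] at hm'
  have hω : IsIntegral S ((1 + algebraMap S (FractionRing S) s) / 2) := by
    refine ⟨Polynomial.X ^ 2 - Polynomial.X - Polynomial.C m, by monicity!, ?_⟩
    simp only [Polynomial.eval₂_sub, Polynomial.eval₂_X_pow, Polynomial.eval₂_X,
      Polynomial.eval₂_C]
    field_simp
    linear_combination hm'
  obtain ⟨ω, hω⟩ := IsIntegrallyClosed.isIntegral_iff.1 hω
  refine ⟨ω, hi ?_⟩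
  rw [map_add, map_one, map_mul, map_ofNat, hω, mul_div_cancel₀ _ h2]

section Sqrt

variable {R S : Type*} [CommRing R] [CommRing S] [Algebra R S] {σ : S ≃ₐ[R] S}

/-- `σ` is the conjugation of the quadratic extension `S` of `R` obtained by adjoining, at the level
of fraction fields, the square root `s` of `a`. The ring `S` may be larger than `R[s]`. -/
structure IsSqrtConj (σ : S ≃ₐ[R] S) (s : S) (a : R) : Prop extends IsQuadraticConj σ where
  sq_eq : s ^ 2 = algebraMap R S a
  apply_root : σ s = -s

namespace IsSqrtConj

variable {s : S} {a : R} {P : Ideal S}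

theorem two_mul_root_mem (h : IsSqrtConj σ s a) (hσ : σ ∈ P.inertia (S ≃ₐ[R] S)) :
    2 * s ∈ P := by
  have hs := P.neg_mem (hσ s)
  rw [AlgEquiv.smul_def, h.apply_root] at hs
  convert hs using 1
  ring

variable [IsDedekindDomain R] [IsDedekindDomain S] [Module.IsTorsionFree R S] [CharZero R]

theorem root_mem_of_four_dvd (h : IsSqrtConj σ s a) (ha : 4 ∣ a - 1)
    (hσ : σ ∈ P.inertia (S ≃ₐ[R] S)) : s ∈ P := by
  have : CharZero S := charZero_of_injective_algebraMap (FaithfulSMul.algebraMap_injective R S)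
  obtain ⟨ω, hω⟩ : 2 ∣ 1 + s := two_dvd_one_add_of_four_dvd <| by
    rw [h.sq_eq, ← map_one (algebraMap R S), ← map_ofNat (algebraMap R S) 4, ← map_sub]
    exact map_dvd _ ha
  have hσω : ω - σ ω = s := by
    refine mul_left_cancel₀ (two_ne_zero (α := S)) ?_
    have hω' := congr(σ $hω)
    simp only [map_add, map_mul, map_one, map_ofNat, h.apply_root] at hω'
    linear_combination hω' - hω
  rw [← hσω, ← neg_sub]
  exact P.neg_mem (hσ ω)

variable [Module.Finite R S]

theorem intNorm_root (h : IsSqrtConj σ s a) : Algebra.intNorm R S s = -a := by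
  rw [h.intNorm_eq_iff, h.apply_root, map_neg, ← h.sq_eq]
  ring

theorem intNorm_add_mul_root (h : IsSqrtConj σ s a) (x y : R) :
    Algebra.intNorm R S (algebraMap R S x + algebraMap R S y * s) = x ^ 2 - a * y ^ 2 := by
  rw [h.intNorm_eq_iff]
  simp only [map_add, map_sub, map_mul, map_pow, AlgEquiv.commutes, h.apply_root, ← h.sq_eq]
  ring

theorem exists_two_mul_eq (h : IsSqrtConj σ s a) (ha : Prime a) (x : S) :
    ∃ t r, 2 * x = algebraMap R S t + algebraMap R S r * s ∧
      4 * Algebra.intNorm R S x = t ^ 2 - a * r ^ 2 := by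
  have hinj := FaithfulSMul.algebraMap_injective R S
  have hs0 : s ≠ 0 := by
    rintro rfl
    exact ha.ne_zero (hinj (by simp [← h.sq_eq]))
  obtain ⟨t, ht⟩ := h.exists_algebraMap_eq (x := x + σ x) (by
    rw [map_add, h.apply_apply, add_comm])
  obtain ⟨n, hn⟩ := h.exists_algebraMap_eq (x := (x - σ x) * s) (by
    rw [map_mul, map_sub, h.apply_apply, h.apply_root]
    ring)
  obtain ⟨e, he⟩ := h.exists_algebraMap_eq (x := (x - σ x) ^ 2) (by
    rw [map_pow, map_sub, h.apply_apply]
    ring)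
  have hne : n ^ 2 = a * e := hinj <| by
    rw [map_pow, map_mul, hn, he, ← h.sq_eq]
    ring
  obtain ⟨r, rfl⟩ := ha.dvd_of_dvd_pow ⟨e, hne⟩
  have hr : x - σ x = algebraMap R S r * s := by
    refine mul_right_cancel₀ hs0 ?_
    rw [← hn, map_mul, ← h.sq_eq]
    ring
  refine ⟨t, r, by rw [← hr, ht]; ring, hinj ?_⟩
  simp only [map_sub, map_mul, map_pow, map_ofNat, h.algebraMap_intNorm, ht, ← h.sq_eq]
  linear_combination -(x - σ x + algebraMap R S r * s) * hr

theorem eq_span_root (h : IsSqrtConj σ s a) (ha : Prime a) (hP : P.IsPrime) (hs : s ∈ P) :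
    P = Ideal.span {s} :=
  eq_span_singleton_of_prime_intNorm hP.ne_top hs (h.intNorm_root ▸ ha.neg)

theorem eq_span_root_or_eq_span (h : IsSqrtConj σ s a) (ha : Prime a) (h2 : Prime (2 : R)) {b : S}
    (hb : Associated (Algebra.intNorm R S b) 2) (hP : P.IsPrime)
    (hσ : σ ∈ P.inertia (S ≃ₐ[R] S)) : P = Ideal.span {s} ∨ P = Ideal.span {b} := by
  refine (hP.mem_or_mem (h.two_mul_root_mem hσ)).symm.imp (h.eq_span_root ha hP) fun h2P ↦
    h.eq_span_singleton_of_mem_inertia hP hσ (hb.prime_iff.2 h2) ?_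
  refine P.mem_of_dvd (map_dvd (algebraMap R S) hb.symm.dvd) ?_
  rwa [map_ofNat]

theorem mem_mrange_intNorm (h : IsSqrtConj σ s a) {b d w x y : R} (hxy : x ^ 2 - a * y ^ 2 = d)
    (hd : d ∣ 2) (hb : b ^ 2 = w * d) : w ∈ MonoidHom.mrange (Algebra.intNorm R S) := by
  set α := algebraMap R S x + algebraMap R S y * s with hα
  have hd0 : d ≠ 0 := ne_zero_of_dvd_ne_zero two_ne_zero hd
  have hdα : algebraMap R S d ∣ α ^ 2 := by
    have hα2 : α ^ 2 = algebraMap R S 2 * algebraMap R S x * α - algebraMap R S d := by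
      simp only [hα, ← hxy, map_sub, map_mul, map_pow, map_ofNat, ← h.sq_eq]
      ring
    rw [hα2, mul_assoc]
    exact ((map_dvd _ hd).mul_right _).sub dvd_rfl
  obtain ⟨v, hv⟩ : algebraMap R S d ∣ algebraMap R S b * α := by
    rw [← IsIntegrallyClosed.pow_dvd_pow_iff two_ne_zero, mul_pow, ← map_pow (algebraMap R S) b, hb,
      map_mul, mul_assoc, pow_two]
    exact (mul_dvd_mul_left _ hdα).mul_left _
  refine ⟨v, mul_left_cancel₀ (pow_ne_zero 2 hd0) ?_⟩
  have hnorm := congr(Algebra.intNorm R S $hv)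
  have hαnorm : Algebra.intNorm R S α = d := (h.intNorm_add_mul_root x y).trans hxy
  rw [map_mul, map_mul, h.intNorm_algebraMap, h.intNorm_algebraMap, hαnorm, hb] at hnorm
  rw [← hnorm]
  ring

end IsSqrtConj

end Sqrt

theorem eq_zero_of_prime_mul_sq_eq_add {q : ℕ} (hq : q.Prime) (hq4 : q % 4 = 3) {r s t : ℤ}
    (h : q * r ^ 2 = s ^ 2 + t ^ 2) : s = 0 := by
  have : Fact q.Prime := ⟨hq⟩
  by_contra hs
  have hr : r.natAbs ≠ 0 := by
    rw [Int.natAbs_ne_zero]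
    rintro rfl
    nlinarith [sq_nonneg t, sq_pos_of_ne_zero hs]
  have hnat : q * r.natAbs ^ 2 = s.natAbs ^ 2 + t.natAbs ^ 2 := by
    zify
    simpa only [sq_abs] using h
  have heven : Even (padicValNat q (q * r.natAbs ^ 2)) :=
    Nat.eq_sq_add_sq_iff.1 ⟨_, _, hnat⟩ (q := q) (by simp [hq, hq.ne_zero, hr]) hq4
  rw [padicValNat.mul hq.ne_zero (pow_ne_zero 2 hr), padicValNat.pow, padicValNat_self] at heven
  grind

namespace IsSqrtConj

section Int

variable {S : Type*} [CommRing S] [IsDedekindDomain S] [Module.Finite ℤ S]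
  [Module.IsTorsionFree ℤ S] {σ : S ≃ₐ[ℤ] S} {s : S} {q : ℕ}

theorem eq_zero_of_intNorm_eq_neg (h : IsSqrtConj σ s (q : ℤ)) (hq : q.Prime) (hq4 : q % 4 = 3)
    {x y : S} (hxy : Algebra.intNorm ℤ S x = -Algebra.intNorm ℤ S y) : y = 0 := by
  obtain ⟨t, r, -, htr⟩ := h.exists_two_mul_eq (Nat.prime_iff_prime_int.1 hq) (x * y)
  rw [map_mul, hxy] at htr
  have hy : 2 * Algebra.intNorm ℤ S y = 0 :=
    eq_zero_of_prime_mul_sq_eq_add hq hq4 (r := r) (t := t) (by linear_combination htr)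
  rw [mul_eq_zero_iff_left two_ne_zero, h.intNorm_eq_iff, map_zero, mul_eq_zero,
    EmbeddingLike.map_eq_zero_iff, or_self] at hy
  exact hy

theorem intNorm_unit (h : IsSqrtConj σ s (q : ℤ)) (hq : q.Prime) (hq4 : q % 4 = 3) (u : Sˣ) :
    Algebra.intNorm ℤ S u = 1 := by
  refine (Int.isUnit_iff.1 (u.isUnit.map (Algebra.intNorm ℤ S))).resolve_right fun hu ↦ ?_
  have := (FaithfulSMul.algebraMap_injective ℤ S).nontrivial
  exact one_ne_zero (h.eq_zero_of_intNorm_eq_neg hq hq4 (y := 1) (by rw [hu, map_one]))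

theorem prime_natCast {a : ℤ} (h : IsSqrtConj σ s a) (ha : Prime a) {p : ℕ} [Fact p.Prime]
    (hp2 : p ≠ 2) (hpa : legendreSym p a = -1) : Prime (p : S) := by
  have hp : p.Prime := Fact.out
  have hpZ : Prime (p : ℤ) := Nat.prime_iff_prime_int.1 hp
  have hnorm : Algebra.intNorm ℤ S (p : S) = (p : ℤ) ^ 2 := by
    rw [← h.intNorm_algebraMap, map_natCast (algebraMap ℤ S)]
  have hcop : IsCoprime (p : S) 2 := by
    have := (Nat.isCoprime_iff_coprime.2 ((Nat.coprime_primes hp Nat.prime_two).2 hp2)).map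
      (algebraMap ℤ S)
    simpa using this
  have dvd_of_dvd_intNorm (x : S) (hx : (p : ℤ) ∣ Algebra.intNorm ℤ S x) : (p : S) ∣ x := by
    obtain ⟨t, r, hx2, hxnorm⟩ := h.exists_two_mul_eq ha x
    obtain ⟨ht, hr⟩ := legendreSym.prime_dvd_of_eq_neg_one hpa (hxnorm ▸ hx.mul_left 4)
    refine hcop.dvd_of_dvd_mul_left ?_
    have hdvd (n : ℤ) (hn : (p : ℤ) ∣ n) : (p : S) ∣ algebraMap ℤ S n := by
      simpa using map_dvd (algebraMap ℤ S) hn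
    exact hx2 ▸ (hdvd t ht).add ((hdvd r hr).mul_right s)
  refine ⟨?_, fun hu ↦ ?_, fun x y hxy ↦ ?_⟩
  · rintro hp0
    exact pow_ne_zero 2 hpZ.ne_zero (hnorm.symm.trans (h.intNorm_eq_iff.2 (by simp [hp0])))
  · have := hu.map (Algebra.intNorm ℤ S)
    rw [hnorm, isUnit_pow_iff two_ne_zero] at this
    exact hpZ.not_isUnit this
  · have hnormxy := map_dvd (Algebra.intNorm ℤ S) hxy
    rw [hnorm, map_mul] at hnormxy
    exact (hpZ.dvd_or_dvd ((dvd_pow_self _ two_ne_zero).trans hnormxy)).imp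
      (dvd_of_dvd_intNorm x) (dvd_of_dvd_intNorm y)

theorem odd_card_classGroup_of_int [Finite (ClassGroup S)] (h : IsSqrtConj σ s (q : ℤ))
    (hq : q.Prime) (hq4 : q % 4 = 3) {b : S} (hb : Associated (Algebra.intNorm ℤ S b) 2) :
    Odd (Nat.card (ClassGroup S)) := by
  refine h.odd_card_classGroup ?_ (fun u x y hy hxy ↦ ?_) fun P hP hσ ↦ ?_
  · rw [Nat.card_eq_fintype_card, card_classGroup_eq_one]
    exact odd_one
  · rcases Int.units_eq_one_or u with rfl | rfl
    · exact one_mem _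
    · exact absurd (h.eq_zero_of_intNorm_eq_neg hq hq4 (x := x) (by rw [← hxy]; simp)) hy
  · rcases h.eq_span_root_or_eq_span (Nat.prime_iff_prime_int.1 hq) Int.prime_two hb hP hσ
      with hP | hP
    exacts [⟨s, hP⟩, ⟨b, hP⟩]

end Int

section Tower

variable {R S : Type*} [CommRing R] [CommRing S] [IsDedekindDomain R] [IsDedekindDomain S]
  [Algebra R S] [Module.Finite R S] [Module.IsTorsionFree R S] [Module.Finite ℤ R]
  [Module.IsTorsionFree ℤ R] [CharZero R] {σ : R ≃ₐ[ℤ] R} {τ : S ≃ₐ[R] S} {q : ℕ} {s a b x y : R}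
  {r : S}

theorem unit_mem_mrange_intNorm (h : IsSqrtConj σ s (q : ℤ)) (h' : IsSqrtConj τ r a)
    (hq : q.Prime) (hq4 : q % 4 = 3) (ha : ∃ x y, x ^ 2 - a * y ^ 2 = -1)
    (hb : Associated (Algebra.intNorm ℤ R b) 2)
    (hxy : x ^ 2 - a * y ^ 2 = algebraMap ℤ R (Algebra.intNorm ℤ R b)) (u : Rˣ) :
    (u : R) ∈ MonoidHom.mrange (Algebra.intNorm R S) := by
  refine h.unit_mem_of_inertia (h.intNorm_unit hq hq4)
    (N := MonoidHom.mrange (Algebra.intNorm R S))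
    (fun u ↦ ⟨algebraMap R S u, h'.intNorm_algebraMap _⟩) (fun P hP hσ ↦ ?_) u
  rcases h.eq_span_root_or_eq_span (Nat.prime_iff_prime_int.1 hq) Int.prime_two hb hP hσ
    with rfl | rfl
  · obtain ⟨z, w, hzw⟩ := ha
    exact ⟨s, rfl, -1, ⟨_, (h'.intNorm_add_mul_root z w).trans hzw⟩, by rw [h.apply_root]; ring⟩
  · obtain ⟨w, hw⟩ := h.exists_eq_mul_apply hσ
    refine ⟨b, rfl, w, h'.mem_mrange_intNorm (b := b) hxy ?_ ?_, hw⟩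
    · simpa using map_dvd (algebraMap ℤ R) hb.dvd
    · rw [h.algebraMap_intNorm]
      linear_combination b * hw

theorem odd_card_classGroup_of_tower [Finite (ClassGroup R)] [Finite (ClassGroup S)]
    (h : IsSqrtConj σ s (q : ℤ)) (h' : IsSqrtConj τ r a) (hq : q.Prime) (hq4 : q % 4 = 3)
    (hprime : Prime a) (ha4 : 4 ∣ a - 1) (ha : ∃ x y, x ^ 2 - a * y ^ 2 = -1)
    (hb : Associated (Algebra.intNorm ℤ R b) 2)
    (hxy : x ^ 2 - a * y ^ 2 = algebraMap ℤ R (Algebra.intNorm ℤ R b)) :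
    Odd (Nat.card (ClassGroup S)) :=
  h'.odd_card_classGroup (h.odd_card_classGroup_of_int hq hq4 hb)
    (fun u _ _ _ _ ↦ h.unit_mem_mrange_intNorm h' hq hq4 ha hb hxy u)
    fun _ hP hσ ↦ ⟨r, h'.eq_span_root hprime hP (h'.root_mem_of_four_dvd ha4 hσ)⟩

end Tower

end IsSqrtConj

/-! ### Pell equations -/

theorem exists_sq_of_coprime_mul_eq {D m n s : ℕ} (hD : D ≠ 0) (hmn : m.Coprime n)
    (h : m * n = D * s ^ 2) :
    ∃ d₁ d₂ a b, d₁ * d₂ = D ∧ m = d₁ * a ^ 2 ∧ n = d₂ * b ^ 2 := by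
  have hd : D.gcd m * D.gcd n = D := by
    rw [← hmn.gcd_mul, h, Nat.gcd_mul_right_right]
  obtain ⟨m', hm⟩ := Nat.gcd_dvd_right D m
  obtain ⟨n', hn⟩ := Nat.gcd_dvd_right D n
  have hcop : m'.Coprime n' :=
    Nat.Coprime.of_dvd (Dvd.intro_left _ hm.symm) (Dvd.intro_left _ hn.symm) hmn
  have hsq : m' * n' = s ^ 2 := by
    refine Nat.eq_of_mul_eq_mul_left (Nat.pos_of_ne_zero hD) ?_
    calc D * (m' * n') = D.gcd m * m' * (D.gcd n * n') := by
          rw [mul_mul_mul_comm, hd]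
      _ = D * s ^ 2 := by rw [← hm, ← hn, h]
  obtain ⟨a, rfl⟩ := exists_eq_pow_of_mul_eq_pow (Nat.isUnit_iff.2 hcop) hsq
  obtain ⟨b, rfl⟩ := exists_eq_pow_of_mul_eq_pow (Nat.isUnit_iff.2 hcop.symm)
    ((mul_comm _ _).trans hsq)
  exact ⟨_, _, a, b, hd, hm, hn⟩

theorem exists_minimal_pell {D : ℕ} (hD : ¬ IsSquare D) :
    ∃ T U, T ^ 2 = D * U ^ 2 + 1 ∧ 1 < T ∧ ∀ a b, 1 < a → a ^ 2 = D * b ^ 2 + 1 → T ≤ a := by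
  have hD0 : 0 < D := Nat.pos_of_ne_zero (by rintro rfl; exact hD (.zero))
  obtain ⟨x, y, hxy, hy⟩ := Pell.exists_of_not_isSquare (d := D) (by exact_mod_cast hD0)
    (by rwa [Int.isSquare_natCast_iff])
  have hex : ∃ T, 1 < T ∧ ∃ U, T ^ 2 = D * U ^ 2 + 1 := by
    have heq : x.natAbs ^ 2 = D * y.natAbs ^ 2 + 1 := by
      zify
      simp only [sq_abs]
      linear_combination hxy
    have hy' : 0 < D * y.natAbs ^ 2 := by positivity
    exact ⟨x.natAbs, (one_lt_sq_iff₀ (Nat.zero_le _)).1 (by omega), y.natAbs, heq⟩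
  classical
  obtain ⟨hT, U, hU⟩ := Nat.find_spec hex
  exact ⟨_, U, hU, hT, fun a b ha hab ↦ Nat.find_min' hex ⟨ha, b, hab⟩⟩

theorem exists_splitting_of_even {D s U : ℕ} (hD : D ≠ 0) (h : (2 * s) ^ 2 = D * U ^ 2 + 1) :
    ∃ d₁ d₂ a b, d₁ * d₂ = D ∧ d₁ * a ^ 2 = d₂ * b ^ 2 + 2 := by
  obtain ⟨t, rfl⟩ : ∃ t, s = t + 1 := Nat.exists_eq_succ_of_ne_zero (by rintro rfl; simp at h)
  have hcop : (2 * t + 3).Coprime (2 * t + 1) := by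
    rw [show 2 * t + 3 = 2 + (2 * t + 1) by ring, Nat.coprime_add_self_left]
    simp
  obtain ⟨d₁, d₂, a, b, hd, h₁, h₂⟩ := exists_sq_of_coprime_mul_eq (s := U) hD hcop (by linarith)
  exact ⟨d₁, d₂, a, b, hd, by rw [← h₁, ← h₂]⟩

theorem exists_splitting_of_odd {D s U : ℕ} (hD : Odd D) (h : (2 * s + 1) ^ 2 = D * U ^ 2 + 1) :
    ∃ d₁ d₂ a b, d₁ * d₂ = D ∧ s + 1 = d₁ * a ^ 2 ∧ s = d₂ * b ^ 2 := by
  have hDU : Even (D * U ^ 2) := ⟨2 * (s ^ 2 + s), by linarith⟩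
  rw [Nat.even_mul, or_iff_right (Nat.not_even_iff_odd.2 hD), Nat.even_pow' two_ne_zero] at hDU
  obtain ⟨V, rfl⟩ := hDU
  exact exists_sq_of_coprime_mul_eq (s := V) hD.pos.ne' (by simp) (by linarith)

/-- Split `(T - 1) * (T + 1) = D * U ^ 2` for the least solution of the Pell equation; `d₁ = 1` in
the second case would give a smaller solution. -/
theorem exists_pell_splitting {D : ℕ} (hodd : Odd D) (hD : ¬ IsSquare D) :
    ∃ d₁ d₂ a b, d₁ * d₂ = D ∧
      (d₁ * a ^ 2 = d₂ * b ^ 2 + 2 ∨ d₁ * a ^ 2 = d₂ * b ^ 2 + 1 ∧ d₁ ≠ 1) := by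
  obtain ⟨T, U, hTU, hT, hmin⟩ := exists_minimal_pell hD
  rcases Nat.even_or_odd' T with ⟨s, rfl | rfl⟩
  · obtain ⟨d₁, d₂, a, b, hd, hab⟩ := exists_splitting_of_even hodd.pos.ne' hTU
    exact ⟨d₁, d₂, a, b, hd, .inl hab⟩
  · obtain ⟨d₁, d₂, a, b, hd, ha, hb⟩ := exists_splitting_of_odd hodd hTU
    refine ⟨d₁, d₂, a, b, hd, .inr ⟨by rw [← ha, ← hb], ?_⟩⟩
    rintro rfl
    rw [one_mul] at ha hd
    subst hd
    have ha1 : 1 < a := by nlinarith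
    have hle := hmin a b ha1 (by rw [← ha, ← hb])
    nlinarith

theorem mul_sq_ne_mul_sq_add_two {d₁ d₂ : ℕ} (hd : d₁ * d₂ % 4 = 1) (a b : ℕ) :
    d₁ * a ^ 2 ≠ d₂ * b ^ 2 + 2 := by
  have hmod : ∀ d e x y : ZMod 4, d * e = 1 → d * x ^ 2 ≠ e * y ^ 2 + 2 := by decide
  intro h
  have hd' : (d₁ * d₂ : ZMod 4) = 1 := by
    exact_mod_cast (ZMod.natCast_eq_natCast_iff' _ 1 4).2 hd
  exact hmod _ _ a b hd' (by exact_mod_cast congr(($h : ZMod 4)))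

theorem mod_four_eq_one_of_mul_sq_eq_mul_sq_add_one {d₁ d₂ a b : ℕ} (hd : d₁ * d₂ % 4 = 3)
    (h : d₁ * a ^ 2 = d₂ * b ^ 2 + 1) : d₁ % 4 = 1 := by
  have hmod : ∀ d e x y : ZMod 4, d * e = 3 → d * x ^ 2 = e * y ^ 2 + 1 → d = 1 := by decide
  have hd' : (d₁ * d₂ : ZMod 4) = 3 := by
    exact_mod_cast (ZMod.natCast_eq_natCast_iff' _ 3 4).2 hd
  have hd₁ : (d₁ : ZMod 4) = (1 : ℕ) := by
    rw [Nat.cast_one]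
    exact hmod _ _ a b hd' (by exact_mod_cast congr(($h : ZMod 4)))
  exact (ZMod.natCast_eq_natCast_iff' _ 1 4).1 hd₁

theorem legendreSym_eq_of_mul_sq_eq_add {q : ℕ} [Fact q.Prime] {m n x y : ℤ}
    (h : m * x ^ 2 = n + q * y) (hn : ¬ (q : ℤ) ∣ n) : legendreSym q m = legendreSym q n := by
  have hx : (x : ZMod q) ≠ 0 := by
    rw [Ne, ZMod.intCast_zmod_eq_zero_iff_dvd]
    refine fun hx ↦ hn ((dvd_add_left (dvd_mul_right _ y)).1 (h ▸ ?_))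
    exact (dvd_pow hx two_ne_zero).mul_left m
  calc legendreSym q m = legendreSym q (m * x ^ 2) := by
        rw [legendreSym.mul, legendreSym.sq_one' q hx, mul_one]
    _ = legendreSym q n := by
        rw [h, legendreSym.mod, Int.add_mul_emod_self_left, ← legendreSym.mod]

theorem legendreSym_neg {q : ℕ} [Fact q.Prime] (hq4 : q % 4 = 3) (n : ℤ) :
    legendreSym q (-n) = -legendreSym q n := by
  rw [neg_eq_neg_one_mul, legendreSym.mul, legendreSym.at_neg_one (by rintro rfl; simp at hq4),
    ZMod.χ₄_nat_three_mod_four hq4, neg_one_mul]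

theorem eq_of_mul_eq_prime {p d₁ d₂ : ℕ} (hp : p.Prime) (hd : d₁ * d₂ = p) :
    d₁ = 1 ∧ d₂ = p ∨ d₁ = p ∧ d₂ = 1 := by
  rcases (Nat.dvd_prime hp).1 (Dvd.intro _ hd) with rfl | rfl
  · exact .inl ⟨rfl, by rwa [one_mul] at hd⟩
  · exact .inr ⟨rfl, (Nat.mul_eq_left hp.ne_zero).1 hd⟩

theorem eq_of_mul_eq_prime_mul_prime {p q d₁ d₂ : ℕ} (hp : p.Prime) (hq : q.Prime)
    (hd : d₁ * d₂ = p * q) :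
    (d₁ = 1 ∧ d₂ = p * q) ∨ (d₁ = p ∧ d₂ = q) ∨ (d₁ = q ∧ d₂ = p) ∨ (d₁ = p * q ∧ d₂ = 1) := by
  obtain ⟨y, z, hy, hz, rfl⟩ := Nat.dvd_mul.1 (Dvd.intro _ hd)
  obtain ⟨y', rfl⟩ := hy
  obtain ⟨z', rfl⟩ := hz
  have hyz : y * z ≠ 0 := by
    intro h0
    rw [h0, zero_mul] at hd
    exact mul_ne_zero hp.ne_zero hq.ne_zero hd.symm
  obtain rfl : d₂ = y' * z' := Nat.eq_of_mul_eq_mul_left (Nat.pos_of_ne_zero hyz) (by linarith)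
  rcases eq_of_mul_eq_prime hp rfl with ⟨rfl, -⟩ | ⟨-, rfl⟩ <;>
    rcases eq_of_mul_eq_prime hq rfl with ⟨rfl, -⟩ | ⟨-, rfl⟩ <;> simp

theorem exists_sq_sub_prime_mul_sq_eq_neg_one {p : ℕ} (hp : p.Prime) (hp4 : p % 4 = 1) :
    ∃ a b : ℤ, a ^ 2 - p * b ^ 2 = -1 := by
  obtain ⟨d₁, d₂, a, b, rfl, h | ⟨h, h₁⟩⟩ := exists_pell_splitting (Nat.odd_iff.2 (by omega))
    hp.prime.irreducible.not_isSquare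
  · exact absurd h (mul_sq_ne_mul_sq_add_two hp4 a b)
  · obtain ⟨-, rfl⟩ := (eq_of_mul_eq_prime hp rfl).resolve_left fun hd ↦ h₁ hd.1
    zify at h
    exact ⟨b, a, by push_cast; linear_combination -h⟩

theorem not_natCast_dvd_two {q : ℕ} (hq4 : q % 4 = 3) : ¬ (q : ℤ) ∣ 2 := fun h ↦ by
  have := Int.le_of_dvd two_pos h
  omega

theorem not_isSquare_of_mod_four_eq_three {n : ℕ} (hn : n % 4 = 3) : ¬ IsSquare n := by
  rintro ⟨r, rfl⟩
  have hsq : ∀ r : ZMod 4, r * r ≠ 3 := by decide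
  exact hsq r (by exact_mod_cast (ZMod.natCast_eq_natCast_iff' _ 3 4).2 hn)

section Norms

variable {p q : ℕ} [Fact q.Prime]

theorem exists_sq_sub_prime_mul_sq_eq_two_mul (hq4 : q % 4 = 3) :
    ∃ a b : ℤ, a ^ 2 - q * b ^ 2 = 2 * legendreSym q 2 := by
  have hq : q.Prime := Fact.out
  have hq2 := not_natCast_dvd_two hq4
  obtain ⟨d₁, d₂, a, b, hd, h | ⟨h, h₁⟩⟩ := exists_pell_splitting (D := q)
    (Nat.odd_iff.2 (by omega)) hq.prime.irreducible.not_isSquare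
  · zify at h
    rcases eq_of_mul_eq_prime hq hd with ⟨hd₁, hd₂⟩ | ⟨hd₁, hd₂⟩ <;> rw [hd₁, hd₂] at h <;>
      push_cast at h
    · have hη := legendreSym_eq_of_mul_sq_eq_add (q := q) (m := 1) (n := 2) (x := a) (y := b ^ 2)
        (by linear_combination h) hq2
      rw [legendreSym.at_one] at hη
      exact ⟨a, b, by linear_combination h + 2 * hη⟩
    · have hη := legendreSym_eq_of_mul_sq_eq_add (q := q) (m := 1) (n := -2) (x := b) (y := a ^ 2)
        (by linear_combination -h) (by rwa [dvd_neg])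
      rw [legendreSym.at_one, legendreSym_neg hq4] at hη
      exact ⟨b, a, by linear_combination -h - 2 * hη⟩
  · have hd4 := mod_four_eq_one_of_mul_sq_eq_mul_sq_add_one (hd ▸ hq4) h
    rcases eq_of_mul_eq_prime hq hd with ⟨hd₁, -⟩ | ⟨hd₁, -⟩ <;> omega

theorem exists_biquadratic_form_eq_two_mul (hp : p.Prime) (hp4 : p % 4 = 1) (hq4 : q % 4 = 3)
    (hpq : legendreSym q p = -1) :
    (∃ a b : ℤ, a ^ 2 - p * q * b ^ 2 = 2 * legendreSym q 2) ∨
      ∃ a b : ℤ, q * a ^ 2 - p * b ^ 2 = 2 * legendreSym q 2 := by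
  have hq : q.Prime := Fact.out
  have hq2 := not_natCast_dvd_two hq4
  have hpq4 : p * q % 4 = 3 := by simp [Nat.mul_mod, hp4, hq4]
  obtain ⟨d₁, d₂, a, b, hd, h | ⟨h, h₁⟩⟩ := exists_pell_splitting (Nat.odd_iff.2 (by omega))
    (not_isSquare_of_mod_four_eq_three hpq4)
  · zify at h
    rcases eq_of_mul_eq_prime_mul_prime hp hq hd with
      ⟨hd₁, hd₂⟩ | ⟨hd₁, hd₂⟩ | ⟨hd₁, hd₂⟩ | ⟨hd₁, hd₂⟩ <;> rw [hd₁, hd₂] at h <;> push_cast at h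
    · have hη := legendreSym_eq_of_mul_sq_eq_add (q := q) (m := 1) (n := 2) (x := a)
        (y := p * b ^ 2) (by linear_combination h) hq2
      rw [legendreSym.at_one] at hη
      exact .inl ⟨a, b, by linear_combination h + 2 * hη⟩
    · have hη := legendreSym_eq_of_mul_sq_eq_add (q := q) (m := p) (n := 2) (x := a)
        (y := b ^ 2) (by linear_combination h) hq2
      exact .inr ⟨b, a, by linear_combination -h - 2 * hpq + 2 * hη⟩
    · have hη := legendreSym_eq_of_mul_sq_eq_add (q := q) (m := p) (n := -2) (x := b)
        (y := a ^ 2) (by linear_combination -h) (by rwa [dvd_neg])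
      rw [legendreSym_neg hq4] at hη
      exact .inr ⟨a, b, by linear_combination h + 2 * hpq - 2 * hη⟩
    · have hη := legendreSym_eq_of_mul_sq_eq_add (q := q) (m := 1) (n := -2) (x := b)
        (y := p * a ^ 2) (by linear_combination -h) (by rwa [dvd_neg])
      rw [legendreSym.at_one, legendreSym_neg hq4] at hη
      exact .inl ⟨b, a, by linear_combination -h - 2 * hη⟩
  · have hd4 := mod_four_eq_one_of_mul_sq_eq_mul_sq_add_one (hd ▸ hpq4) h
    rcases eq_of_mul_eq_prime_mul_prime hp hq hd with
      ⟨hd₁, -⟩ | ⟨hd₁, hd₂⟩ | ⟨hd₁, -⟩ | ⟨hd₁, -⟩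
    · exact absurd hd₁ h₁
    · rw [hd₁, hd₂] at h
      zify at h
      have hone := legendreSym_eq_of_mul_sq_eq_add (q := q) (m := p) (n := 1) (x := a)
        (y := b ^ 2) (by linear_combination h) (by exact_mod_cast hq.not_dvd_one)
      rw [hpq, legendreSym.at_one] at hone
      norm_num at hone
    · omega
    · omega

theorem exists_sq_sub_mul_sq_eq_two_mul {S : Type*} [CommRing S] {s : S} (hs : s ^ 2 = q)
    (hp : p.Prime) (hp4 : p % 4 = 1) (hq4 : q % 4 = 3) (hpq : legendreSym q p = -1) :
    ∃ x y : S, x ^ 2 - p * y ^ 2 = (2 * legendreSym q 2 : ℤ) := by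
  rcases exists_biquadratic_form_eq_two_mul hp hp4 hq4 hpq with ⟨a, b, h⟩ | ⟨a, b, h⟩
  · refine ⟨a, b * s, ?_⟩
    rw [mul_pow, hs, ← h]
    push_cast
    ring
  · refine ⟨a * s, b, ?_⟩
    rw [mul_pow, hs, ← h]
    push_cast
    ring

theorem associated_two_mul_legendreSym_two (hq4 : q % 4 = 3) :
    Associated (2 * legendreSym q 2) 2 := by
  have h2 : ((2 : ℤ) : ZMod q) ≠ 0 :=
    mt (ZMod.intCast_zmod_eq_zero_iff_dvd 2 q).1 (not_natCast_dvd_two hq4)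
  rcases legendreSym.eq_one_or_neg_one q h2 with h | h <;> simp [h]

end Norms

/-! ### The biquadratic field -/

section Fields

variable {F E : Type*} [Field F] [Field E] [Algebra F E] {s : E} {a : F}

theorem finrank_eq_two_of_adjoin_sqrt (hs : s ^ 2 = algebraMap F E a)
    (hsF : s ∉ (algebraMap F E).range) (htop : F⟮s⟯ = ⊤) : Module.finrank F E = 2 := by
  have hmonic : (Polynomial.X ^ 2 - Polynomial.C a : Polynomial F).Monic :=
    Polynomial.monic_X_pow_sub_C a two_ne_zero
  have hroot : Polynomial.aeval s (Polynomial.X ^ 2 - Polynomial.C a : Polynomial F) = 0 := by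
    simp [hs]
  have h_int : IsIntegral F s := ⟨_, hmonic, hroot⟩
  rw [← IntermediateField.finrank_top', ← htop, IntermediateField.adjoin.finrank h_int]
  refine le_antisymm ?_ ((minpoly.two_le_natDegree_iff h_int).2 hsF)
  rw [← Polynomial.natDegree_X_pow_sub_C (n := 2) (r := a)]
  exact Polynomial.natDegree_le_of_dvd (minpoly.dvd F s hroot) hmonic.ne_zero

theorem exists_algEquiv_sqrt_eq_neg [CharZero F] [Algebra.IsQuadraticExtension F E]
    (hs : s ^ 2 = algebraMap F E a) (hsF : s ∉ (algebraMap F E).range) :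
    ∃ τ : E ≃ₐ[F] E, τ s = -s := by
  by_contra! hτ
  refine hsF (IntermediateField.mem_bot.1 ((IsGalois.mem_bot_iff_fixed s).2 fun τ ↦ ?_))
  refine (sq_eq_sq_iff_eq_or_eq_neg.1 ?_).resolve_right (hτ τ)
  rw [← map_pow, hs, τ.commutes]

end Fields

theorem exists_isSqrtConj {A B : Type*} (K L : Type*) [CommRing A] [IsDedekindDomain A] [Field K]
    [CharZero K] [Field L] [CommRing B] [Algebra A B] [Algebra A K] [Algebra A L]
    [Algebra B L] [Algebra K L] [IsScalarTower A K L] [IsScalarTower A B L] [IsFractionRing A K]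
    [IsFractionRing B L] [IsIntegralClosure B A L] {s : B} {a : A} (hs : s ^ 2 = algebraMap A B a)
    (ha : ¬ IsSquare a) (htop : K⟮algebraMap B L s⟯ = ⊤) : ∃ σ : B ≃ₐ[A] B, IsSqrtConj σ s a := by
  have hinj := IsFractionRing.injective B L
  have hsL : (algebraMap B L s) ^ 2 = algebraMap K L (algebraMap A K a) := by
    rw [← map_pow, hs, ← IsScalarTower.algebraMap_apply, ← IsScalarTower.algebraMap_apply]
  have hsK : algebraMap B L s ∉ (algebraMap K L).range := by
    rintro ⟨x, hx⟩
    have hx2 : x ^ 2 = algebraMap A K a := (algebraMap K L).injective (by rw [map_pow, hx, hsL])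
    obtain ⟨y, rfl⟩ := IsIntegrallyClosed.exists_algebraMap_eq_of_isIntegral_pow two_pos
      (hx2 ▸ isIntegral_algebraMap)
    exact ha (isSquare_iff_exists_sq a |>.2
      ⟨y, IsFractionRing.injective A K (by rw [map_pow, hx2])⟩)
  have : Algebra.IsQuadraticExtension K L := ⟨finrank_eq_two_of_adjoin_sqrt hsL hsK htop⟩
  obtain ⟨τ, hτ⟩ := exists_algEquiv_sqrt_eq_neg hsL hsK
  have hσs : galRestrict A K L B τ s = -s :=
    hinj (by rw [algebraMap_galRestrict_apply, hτ, map_neg])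
  refine ⟨galRestrict A K L B τ, ⟨?_, fun hone ↦ hsK ?_⟩, hs, hσs⟩
  · rw [← IsFractionRing.finrank_eq A K B L, Algebra.IsQuadraticExtension.finrank_eq_two K L]
  · have : CharZero L := charZero_of_injective_algebraMap (algebraMap K L).injective
    rw [hone, AlgEquiv.one_apply] at hσs
    have hs0 : algebraMap B L s = 0 := by
      rw [← neg_eq_self, ← map_neg, ← hσs]
    exact hs0 ▸ zero_mem _

theorem exists_ringOfIntegers_sq_eq {F : Type*} [Field F] {x : F} {n : ℕ}
    (hx : x ^ 2 = n) : ∃ y : 𝓞 F, algebraMap (𝓞 F) F y = x ∧ y ^ 2 = n := by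
  have h_int : IsIntegral ℤ x := by
    refine IsIntegral.of_pow two_pos ?_
    rw [hx]
    exact_mod_cast isIntegral_algebraMap (R := ℤ) (A := F) (x := n)
  obtain ⟨y, rfl⟩ := (IsIntegralClosure.isIntegral_iff (A := 𝓞 F)).1 h_int
  refine ⟨y, rfl, RingOfIntegers.coe_injective ?_⟩
  rw [map_pow, hx, map_natCast]

theorem odd_classNumber_of_quadratic_tower {k E : Type*} [Field k] [NumberField k] [Field E]
    [NumberField E] [Algebra k E] {p q : ℕ} (hp : p.Prime) (hq : q.Prime) (hp4 : p % 4 = 1)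
    (hq4 : q % 4 = 3) (hpq : jacobiSym p q = -1) {s : k} {r : E} (hs : s ^ 2 = q) (hr : r ^ 2 = p)
    (hk : ℚ⟮s⟯ = ⊤) (hE : k⟮r⟯ = ⊤) : Odd (classNumber E) := by
  have : Fact p.Prime := ⟨hp⟩
  have : Fact q.Prime := ⟨hq⟩
  have hqp : legendreSym p q = -1 := by
    rw [jacobiSym.legendreSym.to_jacobiSym,
      ← jacobiSym.quadratic_reciprocity_one_mod_four hp4 (Nat.odd_iff.2 (by omega)), hpq]
  rw [← jacobiSym.legendreSym.to_jacobiSym] at hpq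
  obtain ⟨θ, rfl, hθ⟩ := exists_ringOfIntegers_sq_eq hs
  obtain ⟨π, rfl, hπ⟩ := exists_ringOfIntegers_sq_eq hr
  have hqprime : Prime (q : ℤ) := Nat.prime_iff_prime_int.1 hq
  obtain ⟨σ, hσ⟩ := exists_isSqrtConj (A := ℤ) ℚ k (s := θ) (a := q) (by simpa using hθ)
    hqprime.irreducible.not_isSquare hk
  have hpprime : Prime (p : 𝓞 k) := hσ.prime_natCast hqprime (by omega) hqp
  obtain ⟨τ, hτ⟩ := exists_isSqrtConj (A := 𝓞 k) k E (s := π) (a := p) (by simpa using hπ)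
    hpprime.irreducible.not_isSquare hE
  have hp4' : (4 : 𝓞 k) ∣ p - 1 := by
    simpa using map_dvd (algebraMap ℤ (𝓞 k)) (show (4 : ℤ) ∣ p - 1 by omega)
  obtain ⟨a, b, hab⟩ := exists_sq_sub_prime_mul_sq_eq_neg_one hp hp4
  obtain ⟨c, d, hcd⟩ := exists_sq_sub_prime_mul_sq_eq_two_mul hq4
  obtain ⟨x, y, hxy⟩ := exists_sq_sub_mul_sq_eq_two_mul hθ hp hp4 hq4 hpq
  have hnorm := (hσ.intNorm_add_mul_root c d).trans hcd
  have hodd := hσ.odd_card_classGroup_of_tower hτ hq hq4 hpprime hp4'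
    ⟨a, b, by exact_mod_cast congr(($hab : 𝓞 k))⟩
    (hnorm ▸ associated_two_mul_legendreSym_two hq4) (hxy.trans (by rw [hnorm]; simp))
  rwa [Nat.card_eq_fintype_card] at hodd

/-- The `ℚ`-algebra structure on `K` is arbitrary because instance search does not find the one
inherited from `E`. -/
theorem adjoin_eq_top_of_adjoin_image_eq {E : Type*} [Field E] [Algebra ℚ E]
    {K : IntermediateField ℚ E} [inst : Algebra ℚ K] {S : Set K}
    (hS : adjoin ℚ ((↑) '' S : Set E) = K) : adjoin ℚ S = ⊤ := by
  obtain rfl := Subsingleton.elim K.algebra' inst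
  exact lift_injective K (by rw [lift_adjoin, lift_top, hS])

theorem odd_classNumber_of_adjoin_sqrt_pair {E : Type*} [Field E] [NumberField E] {p q : ℕ}
    (hp : p.Prime) (hq : q.Prime) (hp4 : p % 4 = 1) (hq4 : q % 4 = 3) (hpq : jacobiSym p q = -1)
    {r s : E} (hr : r ^ 2 = p) (hs : s ^ 2 = q) (htop : ℚ⟮s, r⟯ = ⊤) : Odd (classNumber E) := by
  refine odd_classNumber_of_quadratic_tower (k := ℚ⟮s⟯) hp hq hp4 hq4 hpq
    (s := AdjoinSimple.gen ℚ s) (r := r) (Subtype.ext (by simpa using hs)) hr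
    (adjoin_eq_top_of_adjoin_image_eq (by simp)) ?_
  exact restrictScalars_eq_top_iff.1 ((adjoin_simple_adjoin_simple ℚ s r).trans htop)

theorem statement5_general (p q : ℕ) (hp : p.Prime) (hq : q.Prime) (hp4 : p % 4 = 1)
    (hq4 : q % 4 = 3) (hpq : jacobiSym p q = -1) [NumberField (Kf p q)] :
    Odd (classNumber (Kf p q)) := by
  let r : Kf p q := ⟨√p, subset_adjoin ℚ _ (by simp)⟩
  let s : Kf p q := ⟨√q, subset_adjoin ℚ _ (by simp)⟩
  refine odd_classNumber_of_adjoin_sqrt_pair (r := r) (s := s) hp hq hp4 hq4 hpq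
    (Subtype.ext (by simp [r])) (Subtype.ext (by simp [s])) (adjoin_eq_top_of_adjoin_image_eq ?_)
  rw [Set.image_pair, Set.pair_comm]
  rfl

theorem statement5 (p q : ℕ) (h : Cond1 p q) [NumberField ↥(Kf p q)] :
    Odd (classNumber ↥(Kf p q)) := by
  obtain ⟨hp, hq, hp4, hq4, -, -, hpq⟩ := h
  exact statement5_general p q hp hq hp4 hq4 hpq
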